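/- arXiv:1808.01553 — 4 statements merged into one kernel-verified Lean document; each statement's English description precedes it below -/
import Mathlib

section
/- Let a, b be nonzero real numbers and let 0 < r < r_0. Then I_{0,0}(r) = (2/a²)·r + a·A_{0,0}(r) - (1/a)·r²·A_{0,0}(r) and J_{0,0}(r) = -(2/b²)·r + b·B_{0,0}(r) - (1/b)·r²·B_{0,0}(r). -/
/-!
Write `D θ = r cos θ + c`. Since `(sin / D)' = (r + c cos) / D ^ 2` and `r cos = D - c`,
one has `r (sin / D)' = c / D - (c ^ 2 - r ^ 2) / D ^ 2`. Integrating between odd multiples of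
`π / 2`, where `D = c` and `sin = ± 1`, gives both identities after division by `c`; this is
`integral_inv_sub_integral_inv_sq`. The condition `0 < r < r₀` keeps `D` away from zero.
-/

open Real Filter Set

/-- `I_{0,0}(r) = ∫_{-π/2}^{π/2} dθ / (r cos θ + a)`. -/
noncomputable def I00 (a : ℝ) (r : ℝ) : ℝ :=
  ∫ θ in (-(π/2))..(π/2), 1 / (r * cos θ + a)

/-- `J_{0,0}(r) = ∫_{π/2}^{3π/2} dθ / (r cos θ + b)`. -/
noncomputable def J00 (b : ℝ) (r : ℝ) : ℝ :=
  ∫ θ in (π/2)..(3*π/2), 1 / (r * cos θ + b)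

/-- `A_{0,0}(r) = ∫_{-π/2}^{π/2} dθ / (r cos θ + a)²`. -/
noncomputable def A00 (a : ℝ) (r : ℝ) : ℝ :=
  ∫ θ in (-(π/2))..(π/2), 1 / (r * cos θ + a) ^ 2

/-- `B_{0,0}(r) = ∫_{π/2}^{3π/2} dθ / (r cos θ + b)²`. -/
noncomputable def B00 (b : ℝ) (r : ℝ) : ℝ :=
  ∫ θ in (π/2)..(3*π/2), 1 / (r * cos θ + b) ^ 2

/-- `0 < r < r₀` where `r₀ = min(r₁, r₂)`, with `r₁ = -a` if `a < 0`, `+∞` if `a > 0`,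
and `r₂ = b` if `b > 0`, `+∞` if `b < 0`. -/
def inAnn (a b r : ℝ) : Prop := 0 < r ∧ (a < 0 → r < -a) ∧ (0 < b → r < b)

/-- The integrated form of `r (sin / D)' = c / D - (c ^ 2 - r ^ 2) / D ^ 2`, where
`D θ = r cos θ + c`. -/
theorem integral_inv_sub_integral_inv_sq {c r x y : ℝ}
    (hD : ∀ θ ∈ uIcc x y, r * cos θ + c ≠ 0) :
    c * (∫ θ in x..y, 1 / (r * cos θ + c))
        - (c ^ 2 - r ^ 2) * (∫ θ in x..y, 1 / (r * cos θ + c) ^ 2)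
      = r * (sin y / (r * cos y + c)) - r * (sin x / (r * cos x + c)) := by
  have i1 : IntervalIntegrable (fun θ => 1 / (r * cos θ + c)) MeasureTheory.volume x y :=
    (ContinuousOn.div (by fun_prop) (by fun_prop) hD).intervalIntegrable
  have i2 : IntervalIntegrable (fun θ => 1 / (r * cos θ + c) ^ 2) MeasureTheory.volume x y :=
    (ContinuousOn.div (by fun_prop) (by fun_prop)
      (fun θ h => pow_ne_zero 2 (hD θ h))).intervalIntegrable
  rw [← intervalIntegral.integral_const_mul, ← intervalIntegral.integral_const_mul,
    ← intervalIntegral.integral_sub (i1.const_mul c) (i2.const_mul _)]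
  refine intervalIntegral.integral_eq_sub_of_hasDerivAt
    (f := fun θ => r * (sin θ / (r * cos θ + c))) (fun θ h => ?_)
    ((i1.const_mul c).sub (i2.const_mul _))
  have h0 := hD θ h
  have hd := ((hasDerivAt_sin θ).div (((hasDerivAt_cos θ).const_mul r).add_const c) h0).const_mul r
  refine hd.congr_deriv ?_
  field_simp
  linear_combination r ^ 2 * sin_sq_add_cos_sq θ

/-- For `0 < r < r₀`:
`I_{0,0}(r) = (2/a²)r + a·A_{0,0}(r) - (1/a)r²A_{0,0}(r)` and
`J_{0,0}(r) = -(2/b²)r + b·B_{0,0}(r) - (1/b)r²B_{0,0}(r)`. -/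
theorem stmt7 (a b : ℝ) (ha : a ≠ 0) (hb : b ≠ 0) (r : ℝ) (hr : inAnn a b r) :
    I00 a r = (2 / a ^ 2) * r + a * A00 a r - (1 / a) * r ^ 2 * A00 a r ∧
    J00 b r = -(2 / b ^ 2) * r + b * B00 b r - (1 / b) * r ^ 2 * B00 b r := by
  obtain ⟨h0, h1, h2⟩ := hr
  have c3 : cos (3 * π / 2) = 0 := by
    rw [show 3 * π / 2 = π / 2 + π by ring, cos_add_pi, cos_pi_div_two, neg_zero]
  have s3 : sin (3 * π / 2) = -1 := by
    rw [show 3 * π / 2 = π / 2 + π by ring, sin_add_pi, sin_pi_div_two]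
  have hA : ∀ θ ∈ uIcc (-(π / 2)) (π / 2), r * cos θ + a ≠ 0 := by
    intro θ h
    rw [uIcc_of_le (by linarith [pi_pos])] at h
    have hc := cos_nonneg_of_mem_Icc h
    have hc1 := cos_le_one θ
    rcases lt_or_gt_of_ne ha with h | h
    · have := h1 h
      nlinarith
    · positivity
  have hB : ∀ θ ∈ uIcc (π / 2) (3 * π / 2), r * cos θ + b ≠ 0 := by
    intro θ h
    rw [uIcc_of_le (by linarith [pi_pos])] at h
    have hc := cos_nonpos_of_pi_div_two_le_of_le h.1 (by linarith [h.2])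
    have hc1 := neg_one_le_cos θ
    rcases lt_or_gt_of_ne hb with h | h
    · nlinarith
    · have := h2 h
      nlinarith
  have eA := integral_inv_sub_integral_inv_sq hA
  have eB := integral_inv_sub_integral_inv_sq hB
  change a * I00 a r - (a ^ 2 - r ^ 2) * A00 a r = _ at eA
  change b * J00 b r - (b ^ 2 - r ^ 2) * B00 b r = _ at eB
  simp only [sin_neg, cos_neg, sin_pi_div_two, cos_pi_div_two, c3, s3, mul_zero, zero_add] at eA eB
  constructor
  · field_simp at eA ⊢
    linear_combination eA
  · field_simp at eB ⊢
    linear_combination eB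
end

section
/- Let a > 0. Then: (i) for 0 < r < a, A_{0,0}(r) = 2r/(a(r²-a²)) + (4a/(a²-r²)^{3/2})·arctan(√((a-r)/(a+r))); (ii) A_{0,0}(a) = 4/(3a²); and (iii) for r > a, A_{0,0}(r) = 2r/(a(r²-a²)) - (2a/(r²-a²)^{3/2})·ln((r+√(r²-a²))/a). -/
/-!
Write `u = r cos θ + a`. Since `(sin θ / u)' = ((r² - a²) + a u) / (r u²)`, for `r² ≠ a²`
the function `1 / u²` has the primitive `(r sin θ / u - a G) / (r² - a²)`, where `G` is any
primitive of `1 / u`; this is `A00_eq_of_primitive`. The half-angle substitution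
`t = tan (θ / 2) = sin θ / (1 + cos θ)` gives `G` as an arctangent for `r < a` and as a logarithm
for `r > a`. For `r = a` it turns `dθ / u²` into `(1 + t²) dt / (2 a²)`, so the primitive is a
polynomial in `t`.
-/

open Real Filter Set

lemma cos_nonneg_of_mem_uIcc {θ : ℝ} (hθ : θ ∈ uIcc (-(π / 2)) (π / 2)) : 0 ≤ cos θ := by
  rw [uIcc_of_le (by linarith [pi_pos])] at hθ
  exact cos_nonneg_of_mem_Icc hθ

lemma denom_pos {a r θ : ℝ} (ha : 0 < a) (hr : 0 < r) (hθ : θ ∈ uIcc (-(π / 2)) (π / 2)) :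
    0 < r * cos θ + a := by
  have := cos_nonneg_of_mem_uIcc hθ
  positivity

lemma A00_eq_sub {a r : ℝ} (ha : 0 < a) (hr : 0 < r) {F : ℝ → ℝ}
    (hF : ∀ θ ∈ uIcc (-(π / 2)) (π / 2), HasDerivAt F (1 / (r * cos θ + a) ^ 2) θ) :
    A00 a r = F (π / 2) - F (-(π / 2)) := by
  refine intervalIntegral.integral_eq_sub_of_hasDerivAt hF (ContinuousOn.intervalIntegrable ?_)
  exact ContinuousOn.div (by fun_prop) (by fun_prop)
    fun θ hθ => pow_ne_zero 2 (denom_pos ha hr hθ).ne'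

lemma hasDerivAt_denom (a r θ : ℝ) :
    HasDerivAt (fun x => r * cos x + a) (r * -sin θ) θ :=
  ((hasDerivAt_cos θ).const_mul r).add_const a

/-- The reduction of `∫ 1 / u²` to `∫ 1 / u`, with `u = r cos θ + a`. -/
lemma A00_eq_of_primitive {a r : ℝ} (ha : 0 < a) (hr : 0 < r) (hra : r ^ 2 - a ^ 2 ≠ 0)
    {G : ℝ → ℝ}
    (hG : ∀ θ ∈ uIcc (-(π / 2)) (π / 2), HasDerivAt G (1 / (r * cos θ + a)) θ) :
    A00 a r = 2 * r / (a * (r ^ 2 - a ^ 2)) -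
      a / (r ^ 2 - a ^ 2) * (G (π / 2) - G (-(π / 2))) := by
  rw [A00_eq_sub ha hr
    (F := fun θ => (r * (sin θ / (r * cos θ + a)) - a * G θ) / (r ^ 2 - a ^ 2))]
  · simp only [sin_neg, cos_neg, sin_pi_div_two, cos_pi_div_two]
    field_simp
    ring
  · intro θ hθ
    have hu := (denom_pos ha hr hθ).ne'
    have h := ((((hasDerivAt_sin θ).div (hasDerivAt_denom a r θ) hu).const_mul r).sub
      ((hG θ hθ).const_mul a)).div_const (r ^ 2 - a ^ 2)
    refine h.congr_deriv ?_
    have hS : sin θ ^ 2 = 1 - cos θ ^ 2 := by linarith [sin_sq_add_cos_sq θ]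
    field_simp
    ring_nf
    rw [hS]
    ring

/-- The derivative of the half-angle tangent `sin θ / (1 + cos θ)`. -/
lemma hasDerivAt_halfTan {θ : ℝ} (h : 0 < 1 + cos θ) :
    HasDerivAt (fun x => sin x / (1 + cos x)) (1 / (1 + cos θ)) θ := by
  have h' := (hasDerivAt_sin θ).div ((hasDerivAt_cos θ).const_add 1) h.ne'
  refine h'.congr_deriv ?_
  have hS : sin θ ^ 2 = 1 - cos θ ^ 2 := by linarith [sin_sq_add_cos_sq θ]
  field_simp
  ring_nf
  rw [hS]
  ring

lemma rpow_three_halves {x : ℝ} (hx : 0 < x) : x ^ ((3 : ℝ) / 2) = x * √x := by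
  rw [show (3 : ℝ) / 2 = 1 + 1 / 2 by norm_num, rpow_add hx, rpow_one, ← sqrt_eq_rpow]

lemma A00_of_lt {a r : ℝ} (ha : 0 < a) (hr : 0 < r) (hra : r < a) :
    A00 a r = 2 * r / (a * (r ^ 2 - a ^ 2)) +
      4 * a / (a ^ 2 - r ^ 2) ^ ((3 : ℝ) / 2) * arctan (√((a - r) / (a + r))) := by
  have hd : 0 < a ^ 2 - r ^ 2 := by nlinarith
  have hq : 0 < (a - r) / (a + r) := div_pos (by linarith) (by linarith)
  have hs : √(a ^ 2 - r ^ 2) = √((a - r) / (a + r)) * (a + r) := by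
    rw [show a ^ 2 - r ^ 2 = (a - r) / (a + r) * (a + r) ^ 2 by field_simp; ring,
      sqrt_mul hq.le, sqrt_sq (by linarith)]
  rw [rpow_three_halves hd, hs]
  have hk : 0 < √((a - r) / (a + r)) := sqrt_pos.2 hq
  have hk2 : √((a - r) / (a + r)) ^ 2 * (a + r) = a - r := by
    rw [sq_sqrt hq.le]
    field_simp
  generalize √((a - r) / (a + r)) = k at *
  rw [A00_eq_of_primitive ha hr (by linarith)
    (G := fun θ => 2 / (k * (a + r)) * arctan (k * (sin θ / (1 + cos θ))))]
  · simp only [sin_neg, cos_neg, sin_pi_div_two, cos_pi_div_two, add_zero, div_one, mul_neg,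
      mul_one, arctan_neg]
    have h1 : r ^ 2 - a ^ 2 ≠ 0 := by linarith
    rw [show a ^ 2 - r ^ 2 = -(r ^ 2 - a ^ 2) by ring]
    field_simp
    ring
  · intro θ hθ
    have hc := cos_nonneg_of_mem_uIcc hθ
    have hu := denom_pos ha hr hθ
    have h := (((hasDerivAt_halfTan (θ := θ) (by linarith)).const_mul k).arctan).const_mul
      (2 / (k * (a + r)))
    refine h.congr_deriv ?_
    have hS : sin θ ^ 2 = (1 - cos θ) * (1 + cos θ) := by linarith [sin_sq_add_cos_sq θ]
    have hden : 1 + (k * (sin θ / (1 + cos θ))) ^ 2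
        = 2 * (r * cos θ + a) / ((a + r) * (1 + cos θ)) := by
      rw [mul_pow, div_pow, hS]
      field_simp
      linear_combination (1 - cos θ) * hk2
    rw [hden]
    field_simp

lemma A00_self {a : ℝ} (ha : 0 < a) : A00 a a = 4 / (3 * a ^ 2) := by
  rw [A00_eq_sub ha ha (F := fun θ => (sin θ / (1 + cos θ) +
    (sin θ / (1 + cos θ)) ^ 3 / 3) / (2 * a ^ 2))]
  · simp only [sin_neg, cos_neg, sin_pi_div_two, cos_pi_div_two]
    field_simp
    norm_num
  · intro θ hθ
    have hc : 0 < 1 + cos θ := by linarith [cos_nonneg_of_mem_uIcc hθ]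
    have ht := hasDerivAt_halfTan hc
    refine ((ht.add ((ht.pow 3).div_const 3)).div_const (2 * a ^ 2)).congr_deriv ?_
    have hS : sin θ ^ 2 = (1 - cos θ) * (1 + cos θ) := by linarith [sin_sq_add_cos_sq θ]
    rw [show a * cos θ + a = a * (1 + cos θ) by ring]
    norm_num
    rw [div_pow, hS]
    field_simp
    ring

lemma A00_of_gt {a r : ℝ} (ha : 0 < a) (hra : a < r) :
    A00 a r = 2 * r / (a * (r ^ 2 - a ^ 2)) -
      2 * a / (r ^ 2 - a ^ 2) ^ ((3 : ℝ) / 2) * log ((r + √(r ^ 2 - a ^ 2)) / a) := by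
  have hr : 0 < r := ha.trans hra
  have hd : 0 < r ^ 2 - a ^ 2 := by nlinarith
  rw [rpow_three_halves hd]
  have hs : 0 < √(r ^ 2 - a ^ 2) := sqrt_pos.2 hd
  have hs2 : √(r ^ 2 - a ^ 2) ^ 2 = r ^ 2 - a ^ 2 := sq_sqrt hd.le
  generalize √(r ^ 2 - a ^ 2) = s at *
  have hsr : s < r := by nlinarith
  -- On the interval `G` equals `(1 / s) log ((p + q t) / (p - q t))` with `t` the
  -- half-angle tangent, `p = √(r + a)` and `q = √(r - a)`.
  rw [A00_eq_of_primitive ha hr hd.ne'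
    (G := fun θ => (log (r + a * cos θ + s * sin θ) - log (r * cos θ + a)) / s)]
  · simp only [sin_neg, cos_neg, sin_pi_div_two, cos_pi_div_two, mul_zero, add_zero, zero_add,
      mul_one, mul_neg]
    -- The two endpoint values are opposite because `(r + s) (r - s) = a²`.
    have hlog : log (r + -s) = 2 * log a - log (r + s) := by
      have h := log_mul (x := r + s) (y := r + -s) (by linarith) (by linarith)
      rw [show (r + s) * (r + -s) = a ^ 2 by linear_combination -hs2, log_pow] at h
      push_cast at h
      linarith
    rw [hlog, log_div (by linarith) ha.ne']
    field_simp
    ring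
  · intro θ hθ
    have hc := cos_nonneg_of_mem_uIcc hθ
    have hu := denom_pos ha hr hθ
    have hN : 0 < r + a * cos θ + s * sin θ := by
      nlinarith [neg_one_le_sin θ, mul_nonneg ha.le hc]
    have hN' : HasDerivAt (fun x => r + a * cos x + s * sin x) (a * -sin θ + s * cos θ) θ :=
      (((hasDerivAt_cos θ).const_mul a).const_add r).add ((hasDerivAt_sin θ).const_mul s)
    refine (((hN'.log hN.ne').sub ((hasDerivAt_denom a r θ).log hu.ne')).div_const s).congr_deriv
      ?_
    have h1 := sin_sq_add_cos_sq θ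
    rw [div_sub_div _ _ hN.ne' hu.ne', div_div, div_eq_div_iff (by positivity) hu.ne']
    linear_combination (r * cos θ + a) * (-sin θ * hs2 + s * r * h1)

/-- Formula (3.14) for `a > 0`:
(i) for `0 < r < a`, `A_{0,0}(r) = 2r/(a(r²-a²)) + (4a/(a²-r²)^{3/2})·arctan√((a-r)/(a+r))`;
(ii) `A_{0,0}(a) = 4/(3a²)`;
(iii) for `r > a`, `A_{0,0}(r) = 2r/(a(r²-a²)) - (2a/(r²-a²)^{3/2})·ln((r+√(r²-a²))/a)`. -/
theorem stmt8 (a : ℝ) (ha : 0 < a) :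
    (∀ r : ℝ, 0 < r → r < a →
      A00 a r = 2 * r / (a * (r ^ 2 - a ^ 2)) +
        4 * a / (a ^ 2 - r ^ 2) ^ ((3:ℝ)/2) * arctan (Real.sqrt ((a - r) / (a + r)))) ∧
    A00 a a = 4 / (3 * a ^ 2) ∧
    (∀ r : ℝ, a < r →
      A00 a r = 2 * r / (a * (r ^ 2 - a ^ 2)) -
        2 * a / (r ^ 2 - a ^ 2) ^ ((3:ℝ)/2) *
          Real.log ((r + Real.sqrt (r ^ 2 - a ^ 2)) / a)) := by
  exact ⟨fun r hr hra => A00_of_lt ha hr hra, A00_self ha, fun r hra => A00_of_gt ha hra⟩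
end

section
/- Let a > 0. The function A_{0,0} is differentiable on (-a, +∞), and for every r ∈ (-a, +∞) its derivative satisfies a(a²-r²)·A_{0,0}'(r) = 3ar·A_{0,0}(r) - 4. -/
/-!
Differentiation under the integral sign gives `A₀₀'(r) = ∫ -2 cos θ / D³` with `D = r cos θ + a`;
it is legitimate because on `[-π/2, π/2]` the quantity `D` is a convex combination of `a` and
`r + a`, hence bounded below by a positive constant locally uniformly in `r > -a`.
The relation between the two integrals is an integration by parts: the combination
`a (a² - r²) (-2 cos θ / D³) - 3 a r / D²` has the antiderivative `-a (a sin θ / D² + sin θ / D)`,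
whose values at `±π/2` are `∓2`.
-/

open Real Filter Set

/-- The interpolation `x c + a = (1 - c) a + c (x + a)` bounds `x c + a` from below for
`c ∈ [0, 1]`. -/
lemma le_mul_cos_add {a x m θ : ℝ} (hθ : θ ∈ Icc (-(π / 2)) (π / 2)) (hm : m ≤ a)
    (hx : m ≤ x + a) : m ≤ x * cos θ + a := by
  have h0 : 0 ≤ cos θ := cos_nonneg_of_mem_Icc hθ
  have h1 : cos θ ≤ 1 := cos_le_one θ
  nlinarith [mul_nonneg (sub_nonneg.2 h1) (sub_nonneg.2 hm), mul_nonneg h0 (sub_nonneg.2 hx)]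

lemma mul_cos_add_pos {a x θ : ℝ} (ha : 0 < a) (hx : -a < x)
    (hθ : θ ∈ Icc (-(π / 2)) (π / 2)) : 0 < x * cos θ + a :=
  lt_of_lt_of_le (lt_min ha (by linarith : 0 < x + a))
    (le_mul_cos_add hθ (min_le_left _ _) (min_le_right _ _))

lemma uIcc_half_pi : uIcc (-(π / 2)) (π / 2) = Icc (-(π / 2)) (π / 2) :=
  uIcc_of_le (by linarith [pi_pos])

lemma intervalIntegrable_div_pow {a r : ℝ} (ha : 0 < a) (hr : -a < r) {f : ℝ → ℝ}
    (hf : Continuous f) (n : ℕ) :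
    IntervalIntegrable (fun θ => f θ / (r * cos θ + a) ^ n) MeasureTheory.volume
      (-(π / 2)) (π / 2) := by
  apply ContinuousOn.intervalIntegrable
  rw [uIcc_half_pi]
  refine hf.continuousOn.div (by fun_prop) fun θ hθ => ?_
  exact pow_ne_zero _ (mul_cos_add_pos ha hr hθ).ne'

lemma hasDerivAt_A00 {a r : ℝ} (ha : 0 < a) (hr : -a < r) :
    HasDerivAt (A00 a) (∫ θ in (-(π / 2))..(π / 2), -2 * cos θ / (r * cos θ + a) ^ 3) r := by
  -- On `x > (r - a) / 2`, the midpoint of `-a` and `r`, one has `x cos θ + a ≥ m`.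
  set m : ℝ := min a ((r + a) / 2) with hm
  have hm0 : 0 < m := lt_min ha (by linarith)
  have hlow : ∀ x ∈ Ioi ((r - a) / 2), -a < x := fun x hx => by
    have : (r - a) / 2 < x := hx
    linarith
  have hs : Ioi ((r - a) / 2) ∈ nhds r := Ioi_mem_nhds (by linarith)
  have hsub : ∀ θ ∈ uIoc (-(π / 2)) (π / 2), θ ∈ Icc (-(π / 2)) (π / 2) := fun θ hθ => by
    rw [← uIcc_half_pi]; exact uIoc_subset_uIcc hθ
  refine (intervalIntegral.hasDerivAt_integral_of_dominated_loc_of_deriv_le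
    (F := fun x θ => 1 / (x * cos θ + a) ^ 2)
    (F' := fun x θ => -2 * cos θ / (x * cos θ + a) ^ 3)
    (bound := fun _ => 2 / m ^ 3) hs ?_ ?_ ?_ ?_ ?_ ?_).2
  · filter_upwards [hs] with x hx
    exact (intervalIntegrable_div_pow ha (hlow x hx) continuous_const 2).aestronglyMeasurable_restrict_uIoc
  · exact intervalIntegrable_div_pow ha hr continuous_const 2
  · exact (intervalIntegrable_div_pow ha hr (f := fun θ => -2 * cos θ)
      (by fun_prop) 3).aestronglyMeasurable_restrict_uIoc
  · refine Eventually.of_forall fun θ hθ x hx => ?_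
    have hD : m ≤ x * cos θ + a := le_mul_cos_add (hsub θ hθ) (min_le_left _ _)
      ((min_le_right _ _).trans (by have : (r - a) / 2 < x := hx; linarith))
    rw [norm_div, norm_mul, norm_pow, Real.norm_eq_abs (x * cos θ + a),
      abs_of_pos (hm0.trans_le hD), Real.norm_eq_abs, Real.norm_eq_abs]
    have : |(-2 : ℝ)| * |cos θ| ≤ 2 := by
      have := abs_cos_le_one θ
      norm_num
      linarith
    gcongr
  · exact intervalIntegrable_const
  · refine Eventually.of_forall fun θ hθ x hx => ?_
    have hD := (mul_cos_add_pos ha (hlow x hx) (hsub θ hθ)).ne'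
    have h1 : HasDerivAt (fun x : ℝ => x * cos θ + a) (cos θ) x := by
      simpa using ((hasDerivAt_id x).mul_const (cos θ)).add_const a
    refine ((hasDerivAt_const x (1 : ℝ)).fun_div (h1.fun_pow 2) (pow_ne_zero 2 hD)).congr_deriv ?_
    field_simp
    ring

/-- The antiderivative behind the integration by parts. -/
lemma hasDerivAt_antideriv {a r θ : ℝ} (hD : r * cos θ + a ≠ 0) :
    HasDerivAt
      (fun θ => -a * (a * (sin θ / (r * cos θ + a) ^ 2) + sin θ / (r * cos θ + a)))
      (a * (a ^ 2 - r ^ 2) * (-2 * cos θ / (r * cos θ + a) ^ 3)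
        - 3 * a * r * (1 / (r * cos θ + a) ^ 2)) θ := by
  have h1 : HasDerivAt (fun θ : ℝ => r * cos θ + a) (r * -sin θ) θ :=
    ((hasDerivAt_cos θ).const_mul r).add_const a
  refine (((((hasDerivAt_sin θ).fun_div (h1.fun_pow 2) (pow_ne_zero 2 hD)).const_mul a).fun_add
    ((hasDerivAt_sin θ).fun_div h1 hD)).const_mul (-a)).congr_deriv ?_
  push_cast
  field_simp
  ring_nf
  simp only [sin_sq]
  ring

/-- Equation (3.15): for `a > 0`, `A_{0,0}` is differentiable on `(-a, +∞)` and
`a(a²-r²)A₀₀'(r) = 3ar·A₀₀(r) - 4` there. -/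
theorem stmt9 (a : ℝ) (ha : 0 < a) :
    (∀ r ∈ Set.Ioi (-a), DifferentiableAt ℝ (A00 a) r) ∧
    (∀ r ∈ Set.Ioi (-a),
      a * (a ^ 2 - r ^ 2) * deriv (A00 a) r = 3 * a * r * A00 a r - 4) := by
  refine ⟨fun r hr => (hasDerivAt_A00 ha hr).differentiableAt, fun r hr => ?_⟩
  have i1 := (intervalIntegrable_div_pow ha hr (f := fun θ => -2 * cos θ) (by fun_prop) 3).const_mul
    (a * (a ^ 2 - r ^ 2))
  have i2 := (intervalIntegrable_div_pow ha hr (f := fun _ => 1) continuous_const 2).const_mul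
    (3 * a * r)
  have key := intervalIntegral.integral_eq_sub_of_hasDerivAt
    (fun θ hθ => hasDerivAt_antideriv
      (mul_cos_add_pos ha hr (uIcc_half_pi ▸ hθ)).ne') (i1.sub i2)
  rw [intervalIntegral.integral_sub i1 i2, intervalIntegral.integral_const_mul,
    intervalIntegral.integral_const_mul] at key
  simp only [sin_neg, cos_neg, sin_pi_div_two, cos_pi_div_two] at key
  rw [(hasDerivAt_A00 ha hr).deriv, A00, sub_eq_iff_eq_add.1 key]
  have : a ≠ 0 := ha.ne'
  simp only [mul_zero, zero_add]
  field_simp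
  ring
end

section
/- Let a > 0 and b > 0. Then: (i) there exists a function F analytic on the complex domain D_1 = ℂ \ {z ∈ ℝ : z ≤ -a} such that F(r) = A_{0,0}(r) for every real r > -a; and (ii) there exists a function G analytic on the complex domain D_2 = ℂ \ {z ∈ ℝ : z ≥ b} such that G(r) = B_{0,0}(r) for every real r < b. -/
open Real Filter Set

/-!
The extension of `A00 a` is given by the same integral with a complex parameter `z`. The
denominator `z cos θ + a` can vanish with `cos θ ∈ [0, 1]` only at `z = -a / cos θ ≤ -a`, so on the
slit plane the integrand is holomorphic in `z` and jointly continuous; compactness of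
`[-π/2, π/2]` bounds its `z`-derivative locally uniformly, and one may differentiate under the
integral sign (`analyticOnNhd_A00C`). The second extension follows from the first, since the
substitution `θ ↦ θ + π` gives `B00 b r = A00 b (-r)`.
-/

/-- The slit plane `ℂ \ (-∞, -a]`. -/
def slitDomain (a : ℝ) : Set ℂ := {z : ℂ | ¬ (z.im = 0 ∧ z.re ≤ -a)}

/-- The integral defining `A00`, with a complex parameter. -/
noncomputable def A00C (a : ℝ) (z : ℂ) : ℂ :=
  ∫ θ in (-(π/2))..(π/2), 1 / (z * (cos θ : ℂ) + a) ^ 2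

lemma isOpen_slitDomain (a : ℝ) : IsOpen (slitDomain a) := by
  have h : IsClosed {z : ℂ | z.im = 0 ∧ z.re ≤ -a} :=
    (isClosed_eq Complex.continuous_im continuous_const).inter
      (isClosed_le Complex.continuous_re continuous_const)
  exact h.isOpen_compl

lemma denom_ne_zero {a : ℝ} (ha : 0 < a) {z : ℂ} (hz : z ∈ slitDomain a) {θ : ℝ}
    (hθ : θ ∈ Icc (-(π/2)) (π/2)) : z * (cos θ : ℂ) + a ≠ 0 := by
  intro h
  have hc := cos_nonneg_of_mem_Icc hθ
  have hc1 := cos_le_one θ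
  have hre : z.re * cos θ + a = 0 := by
    simpa [-Complex.ofReal_cos] using congrArg Complex.re h
  have him : z.im * cos θ = 0 := by
    simpa [-Complex.ofReal_cos] using congrArg Complex.im h
  have hc0 : cos θ ≠ 0 := by
    intro h0
    rw [h0] at hre
    linarith
  refine hz ⟨(mul_eq_zero.mp him).resolve_right hc0, ?_⟩
  by_contra! hlt
  have hpos : 0 < cos θ := lt_of_le_of_ne hc (Ne.symm hc0)
  nlinarith [mul_pos hpos (neg_lt_iff_pos_add.mp hlt), mul_nonneg ha.le (sub_nonneg.mpr hc1)]

lemma hasDerivAt_integrand {a : ℝ} {z : ℂ} {c : ℂ} (h : z * c + a ≠ 0) :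
    HasDerivAt (fun z : ℂ => 1 / (z * c + a) ^ 2) (-(2 * c) / (z * c + a) ^ 3) z := by
  have h1 : HasDerivAt (fun z : ℂ => (z * c + a) ^ 2) (2 * (z * c + a) * c) z := by
    simpa using (((hasDerivAt_id z).mul_const c).add_const (a : ℂ)).fun_pow 2
  have h2 := h1.fun_inv (pow_ne_zero 2 h)
  simp only [one_div]
  refine h2.congr_deriv ?_
  rw [div_eq_div_iff (pow_ne_zero 2 (pow_ne_zero 2 h)) (pow_ne_zero 3 h)]
  ring

lemma analyticOnNhd_A00C {a : ℝ} (ha : 0 < a) : AnalyticOnNhd ℂ (A00C a) (slitDomain a) := by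
  refine DifferentiableOn.analyticOnNhd (fun z₀ hz₀ => ?_) (isOpen_slitDomain a)
  obtain ⟨ε, hε, hball⟩ :=
    Metric.nhds_basis_closedBall.mem_iff.mp ((isOpen_slitDomain a).mem_nhds hz₀)
  have hle : -(π/2) ≤ π/2 := by linarith [pi_pos]
  have hsub : uIoc (-(π/2)) (π/2) ⊆ Icc (-(π/2)) (π/2) := by
    rw [uIoc_of_le hle]
    exact Ioc_subset_Icc_self
  have hcF : ∀ z ∈ slitDomain a,
      ContinuousOn (fun θ : ℝ => 1 / (z * (cos θ : ℂ) + a) ^ 2) (Icc (-(π/2)) (π/2)) :=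
    fun z hz => ContinuousOn.div (by fun_prop) (by fun_prop)
      fun θ hθ => pow_ne_zero 2 (denom_ne_zero ha hz hθ)
  have hcF' : ContinuousOn
      (fun p : ℂ × ℝ => -(2 * (cos p.2 : ℂ)) / (p.1 * (cos p.2 : ℂ) + a) ^ 3)
      (Metric.closedBall z₀ ε ×ˢ Icc (-(π/2)) (π/2)) :=
    ContinuousOn.div (by fun_prop) (by fun_prop)
      fun p hp => pow_ne_zero 3 (denom_ne_zero ha (hball hp.1) hp.2)
  obtain ⟨C, hC⟩ :=
    ((isCompact_closedBall z₀ ε).prod isCompact_Icc).exists_bound_of_continuousOn hcF'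
  have hcF'₀ : ContinuousOn
      (fun θ : ℝ => -(2 * (cos θ : ℂ)) / (z₀ * (cos θ : ℂ) + a) ^ 3) (Icc (-(π/2)) (π/2)) :=
    ContinuousOn.div (by fun_prop) (by fun_prop)
      fun θ hθ => pow_ne_zero 3 (denom_ne_zero ha hz₀ hθ)
  have key := intervalIntegral.hasDerivAt_integral_of_dominated_loc_of_deriv_le
    (μ := MeasureTheory.volume) (a := -(π/2)) (b := π/2)
    (F := fun (z : ℂ) (θ : ℝ) => 1 / (z * (cos θ : ℂ) + a) ^ 2)
    (F' := fun (z : ℂ) (θ : ℝ) => -(2 * (cos θ : ℂ)) / (z * (cos θ : ℂ) + a) ^ 3)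
    (bound := fun _ => C) (Metric.closedBall_mem_nhds z₀ hε)
    (by
      filter_upwards [(isOpen_slitDomain a).mem_nhds hz₀] with z hz
      exact ((hcF z hz).mono hsub).aestronglyMeasurable measurableSet_uIoc)
    (by
      apply ContinuousOn.intervalIntegrable
      rw [uIcc_of_le hle]
      exact hcF z₀ hz₀)
    ((hcF'₀.mono hsub).aestronglyMeasurable measurableSet_uIoc)
    (Eventually.of_forall fun θ hθ z hz => hC (z, θ) ⟨hz, hsub hθ⟩)
    intervalIntegrable_const
    (Eventually.of_forall fun θ hθ z hz =>
      hasDerivAt_integrand (denom_ne_zero ha (hball hz) (hsub hθ)))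
  exact key.2.differentiableAt.differentiableWithinAt

/-- No restriction on `r` is needed: casting to `ℂ` commutes with the interval integral even when
the integrand is not integrable, both sides then being `0`. -/
lemma A00C_ofReal (a r : ℝ) : A00C a (r : ℂ) = (A00 a r : ℂ) := by
  unfold A00C A00
  rw [← intervalIntegral.integral_ofReal]
  push_cast
  rfl

lemma B00_eq_A00_neg (b r : ℝ) : B00 b r = A00 b (-r) := by
  unfold A00 B00
  have h := intervalIntegral.integral_comp_add_right (a := -(π/2)) (b := π/2)
    (fun θ : ℝ => 1 / (r * cos θ + b) ^ 2) π
  have e1 : -(π/2) + π = π/2 := by ring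
  have e2 : π/2 + π = 3*π/2 := by ring
  rw [e1, e2] at h
  rw [← h]
  simp only [cos_add_pi, mul_neg, neg_mul]

/-- Lemma 3.4: for `a, b > 0`, `A_{0,0}` extends analytically to
`D₁ = ℂ \ {r ∈ ℝ : r ≤ -a}` and `B_{0,0}` extends analytically to
`D₂ = ℂ \ {r ∈ ℝ : r ≥ b}`. -/
theorem stmt11 (a b : ℝ) (ha : 0 < a) (hb : 0 < b) :
    (∃ F : ℂ → ℂ, AnalyticOnNhd ℂ F {z : ℂ | ¬ (z.im = 0 ∧ z.re ≤ -a)} ∧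
      ∀ r : ℝ, -a < r → F (r : ℂ) = (A00 a r : ℂ)) ∧
    (∃ G : ℂ → ℂ, AnalyticOnNhd ℂ G {z : ℂ | ¬ (z.im = 0 ∧ b ≤ z.re)} ∧
      ∀ r : ℝ, r < b → G (r : ℂ) = (B00 b r : ℂ)) := by
  refine ⟨⟨A00C a, analyticOnNhd_A00C ha, fun r _ => A00C_ofReal a r⟩,
    ⟨fun z => A00C b (-z), ?_, fun r _ => ?_⟩⟩
  · refine (analyticOnNhd_A00C hb).comp (fun z _ => analyticAt_id.neg) fun z hz h => hz ?_
    simpa using h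
  · rw [B00_eq_A00_neg, ← A00C_ofReal]
    push_cast
    rfl
end
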